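/- For every integer n ≥ 2, the monoid M_n is singly aligned: for all p, q ∈ M_n, either pM_n ∩ qM_n = ∅ or there exists r ∈ M_n with pM_n ∩ qM_n = rM_n. -/

import Mathlib

namespace Malcev

/-- The alphabet `X_n`: letters `a, b, c, d` together with `A_i, B_i, C_i, D_i`
for `i` ranging over `Fin n` (so `A ⟨0, _⟩` represents `A_1`, etc.). -/
inductive Letter (n : ℕ) : Type
  | a | b | c | d
  | A (i : Fin n) | B (i : Fin n) | C (i : Fin n) | D (i : Fin n)
  deriving DecidableEq

open FreeMonoid

/-- The defining relations `ρ_n`. -/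
inductive rel (n : ℕ) : FreeMonoid (Letter n) → FreeMonoid (Letter n) → Prop
  | da (h : 0 < n) :
      rel n (of .d * of .a) (of (.A ⟨0, h⟩) * of (.C ⟨0, h⟩))
  | AD (i : ℕ) (h : i + 1 < n) :
      rel n (of (.A ⟨i, Nat.lt_of_succ_lt h⟩) * of (.D ⟨i, Nat.lt_of_succ_lt h⟩))
            (of (.A ⟨i + 1, h⟩) * of (.C ⟨i + 1, h⟩))
  | An (h : 0 < n) :
      rel n (of (.A ⟨n - 1, Nat.sub_lt h Nat.one_pos⟩) * of (.D ⟨n - 1, Nat.sub_lt h Nat.one_pos⟩))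
            (of .d * of .b)
  | cb (h : 0 < n) :
      rel n (of .c * of .b)
            (of (.B ⟨n - 1, Nat.sub_lt h Nat.one_pos⟩) * of (.D ⟨n - 1, Nat.sub_lt h Nat.one_pos⟩))
  | BC (i : ℕ) (h : i + 1 < n) :
      rel n (of (.B ⟨i + 1, h⟩) * of (.C ⟨i + 1, h⟩))
            (of (.B ⟨i, Nat.lt_of_succ_lt h⟩) * of (.D ⟨i, Nat.lt_of_succ_lt h⟩))

/-- The congruence on the free monoid generated by `ρ_n`. -/
def Mcon (n : ℕ) : Con (FreeMonoid (Letter n)) := conGen (rel n)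

/-- The presented monoid `M_n = Mon⟨X_n | ρ_n⟩`. -/
abbrev Mn (n : ℕ) : Type := (Mcon n).Quotient

/-- The quotient (natural) map `X_n* → M_n`. -/
def mk (n : ℕ) : FreeMonoid (Letter n) →* Mn n := (Mcon n).mk'

/-- The image in `M_n` of a single letter. -/
def gen {n : ℕ} (x : Letter n) : Mn n := mk n (of x)

/-- The image in `M_n` of a word (given as a list of letters). -/
def word {n : ℕ} (w : List (Letter n)) : Mn n := mk n (ofList w)

/-- The set `P_n = {c, d, A_1, …, A_n, B_1, …, B_n}`. -/
def inP {n : ℕ} : Letter n → Prop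
  | .c => True | .d => True | .A _ => True | .B _ => True | _ => False

/-- The set `Q_n = {a, b, C_1, …, C_n, D_1, …, D_n}`. -/
def inQ {n : ℕ} : Letter n → Prop
  | .a => True | .b => True | .C _ => True | .D _ => True | _ => False

/-- `inR x y` means the two-letter word `xy` belongs to
`R_n = {db, A_1C_1, …, A_nC_n, B_1D_1, …, B_nD_n}`. -/
def inR {n : ℕ} : Letter n → Letter n → Prop
  | .d, .b => True
  | .A i, .C j => i = j
  | .B i, .D j => i = j
  | _, _ => False

/-- `inL x y` means the two-letter word `xy` belongs to
`L_n = {cb, da, A_1D_1, …, A_nD_n, B_2C_2, …, B_nC_n}`. -/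
def inL {n : ℕ} : Letter n → Letter n → Prop
  | .c, .b => True
  | .d, .a => True
  | .A i, .D j => i = j
  | .B i, .C j => i = j ∧ 1 ≤ i.val
  | _, _ => False

/-- A word is in left normal form if no two consecutive letters form a word in `R_n`. -/
def LeftNormal {n : ℕ} (w : List (Letter n)) : Prop :=
  List.Chain' (fun x y => ¬ inR x y) w

/-- `v ∈ M_n` is an intersection base if some word `a_1 ⋯ a_m` (`m ≥ 2`) in left
normal form equals `v` in `M_n` and its final two letters form a word in `L_n`. -/
def IsIntersectionBase {n : ℕ} (v : Mn n) : Prop :=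
  ∃ (w : List (Letter n)) (x y : Letter n),
    LeftNormal (w ++ [x, y]) ∧ word (w ++ [x, y]) = v ∧ inL x y

/-- The principal right ideal `pM_n`. -/
def rIdeal {n : ℕ} (p : Mn n) : Set (Mn n) := {x | ∃ m, x = p * m}

/-- `Step x y x' y'` means that `(xy, x'y')` is one of the defining relations. -/
inductive Step {n : ℕ} : Letter n → Letter n → Letter n → Letter n → Prop
  | da (i : Fin n) (h : i.val = 0) : Step .d .a (.A i) (.C i)
  | AD (i j : Fin n) (h : j.val = i.val + 1) : Step (.A i) (.D i) (.A j) (.C j)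
  | An (i : Fin n) (h : i.val + 1 = n) : Step (.A i) (.D i) .d .b
  | cb (i : Fin n) (h : i.val + 1 = n) : Step .c .b (.B i) (.D i)
  | BC (i j : Fin n) (h : j.val = i.val + 1) : Step (.B j) (.C j) (.B i) (.D i)

/-- The symmetric closure of `Step`. -/
def Swap {n : ℕ} (x y x' y' : Letter n) : Prop := Step x y x' y' ∨ Step x' y' x y

theorem Swap.symm {n : ℕ} {x y x' y' : Letter n} (h : Swap x y x' y') : Swap x' y' x y :=
  Or.symm h

theorem Swap.inP_left {n : ℕ} {x y x' y' : Letter n} (h : Swap x y x' y') : inP x := by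
  rcases h with h | h <;> cases h <;> trivial

theorem Swap.inQ_left {n : ℕ} {x y x' y' : Letter n} (h : Swap x y x' y') : inQ y := by
  rcases h with h | h <;> cases h <;> trivial

theorem not_inP_of_inQ {n : ℕ} {x : Letter n} (h : inQ x) : ¬ inP x := by
  cases x <;> simp_all [inP, inQ]

theorem Swap.eq_of_swap {n : ℕ} {x y x' y' z w : Letter n} (h : Swap x y x' y')
    (h' : Swap x' y' z w) : x = z ∧ y = w := by
  rcases h with h | h <;> cases h <;> rcases h' with h' | h' <;> cases h' <;>
    simp [Fin.ext_iff] <;> omega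

/-- For `n ≥ 2` the two first letters of a defining relation determine the relation. -/
theorem Swap.eq_of_fst {n : ℕ} (hn : 2 ≤ n) {x y x' y' z w : Letter n} (h : Swap x y x' y')
    (h' : Swap x z x' w) : y = z := by
  rcases h with h | h <;> cases h <;> rcases h' with h' | h' <;> cases h' <;>
    first | rfl | (exfalso; omega)

/-- Equality of words in `M_n`: they agree up to swapping disjoint two-letter factors. -/
inductive Equ {n : ℕ} : List (Letter n) → List (Letter n) → Prop
  | nil : Equ [] []
  | cons (x : Letter n) {u v : List (Letter n)} (h : Equ u v) : Equ (x :: u) (x :: v)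
  | swap {x y x' y' : Letter n} {u v : List (Letter n)} (s : Swap x y x' y') (h : Equ u v) :
      Equ (x :: y :: u) (x' :: y' :: v)

namespace Equ

variable {n : ℕ} {u v w p q : List (Letter n)}

theorem refl : ∀ u : List (Letter n), Equ u u
  | [] => .nil
  | x :: u => .cons x (refl u)

theorem symm (h : Equ u v) : Equ v u := by
  induction h with
  | nil => exact .nil
  | cons x _ ih => exact .cons x ih
  | swap s _ ih => exact .swap s.symm ih

theorem append (h : Equ u v) (h' : Equ p q) : Equ (u ++ p) (v ++ q) := by
  induction h with
  | nil => exact h'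
  | cons x _ ih => exact .cons x ih
  | swap s _ ih => exact .swap s ih

theorem exists_of_inQ {y : Letter n} (hy : inQ y) (h : Equ u (y :: v)) :
    ∃ u', u = y :: u' ∧ Equ u' v := by
  cases h with
  | cons _ h => exact ⟨_, rfl, h⟩
  | swap s _ => exact absurd s.symm.inP_left (not_inP_of_inQ hy)

theorem trans (h : Equ u v) (h' : Equ v w) : Equ u w := by
  induction hk : v.length using Nat.strong_induction_on generalizing u v w with
  | _ k ih =>
    subst hk
    cases h with
    | nil => exact h'
    | cons x h =>
      cases h' with
      | cons _ h' => exact .cons x (ih _ (by simp) h h' rfl)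
      | swap s h' =>
        obtain ⟨u', rfl, hu⟩ := exists_of_inQ s.inQ_left h
        exact .swap s (ih _ (by simp) hu h' rfl)
    | swap s h =>
      cases h' with
      | cons _ h' =>
        obtain ⟨w', rfl, hw⟩ := exists_of_inQ s.symm.inQ_left h'.symm
        exact .swap s (ih _ (by simp) h hw.symm rfl)
      | swap s' h' =>
        obtain ⟨rfl, rfl⟩ := s.eq_of_swap s'
        exact .cons _ (.cons _ (ih _ (by simp) h h' rfl))

/-- Cutting equal words after prefixes of the same length either splits the equality, or cuts
through a swapped factor. -/
theorem split (h : Equ (p ++ u) (q ++ v)) (hl : p.length = q.length) :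
    (Equ p q ∧ Equ u v) ∨ ∃ p' x y u' q' z w v', p = p' ++ [x] ∧ u = y :: u' ∧ q = q' ++ [z] ∧
      v = w :: v' ∧ Swap x y z w ∧ Equ p' q' ∧ Equ u' v' := by
  induction hk : p.length using Nat.strong_induction_on generalizing p q with
  | _ k ih =>
    subst hk
    match p, q, hl with
    | [], [], _ => exact .inl ⟨.nil, h⟩
    | [x], [z], _ =>
      cases h with
      | cons _ h => exact .inl ⟨refl _, h⟩
      | swap s h => exact .inr ⟨[], x, _, _, [], z, _, _, rfl, rfl, rfl, rfl, s, .nil, h⟩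
    | x :: y :: p, z :: w :: q, hl =>
      cases h with
      | cons _ h =>
        rcases ih _ (by simp) (p := y :: p) (q := w :: q) h (by simpa using hl) rfl with
          ⟨h₁, h₂⟩ | ⟨p', x', y', u', q', z', w', v', hp, hu, hq, hv, s, h₁, h₂⟩
        · exact .inl ⟨.cons _ h₁, h₂⟩
        · exact .inr ⟨x :: p', x', y', u', x :: q', z', w', v', by simp [hp], hu, by simp [hq],
            hv, s, .cons _ h₁, h₂⟩
      | swap s' h =>
        rcases ih _ (by simp) (p := p) (q := q) h (by simpa using hl) rfl with
          ⟨h₁, h₂⟩ | ⟨p', x', y', u', q', z', w', v', hp, hu, hq, hv, s, h₁, h₂⟩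
        · exact .inl ⟨.swap s' h₁, h₂⟩
        · exact .inr ⟨x :: y :: p', x', y', u', z :: w :: q', z', w', v', by simp [hp], hu,
            by simp [hq], hv, s, .swap s' h₁, h₂⟩

end Equ

/-- `Equ` as a congruence on the free monoid. -/
def equCon (n : ℕ) : Con (FreeMonoid (Letter n)) where
  r u v := Equ u.toList v.toList
  iseqv := ⟨fun u => .refl u.toList, .symm, .trans⟩
  mul' h h' := by simpa using h.append h'

theorem Mcon_le_equCon (n : ℕ) : Mcon n ≤ equCon n := by
  refine Con.conGen_le.2 fun u v h => ?_
  cases h with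
  | da h => exact .swap (.inl (.da _ rfl)) .nil
  | AD i h => exact .swap (.inl (.AD _ _ rfl)) .nil
  | An h => exact .swap (.inl (.An _ (Nat.sub_add_cancel h))) .nil
  | cb h => exact .swap (.inl (.cb _ (Nat.sub_add_cancel h))) .nil
  | BC i h => exact .swap (.inl (.BC _ _ rfl)) .nil

theorem word_append {n : ℕ} (u v : List (Letter n)) : word (u ++ v) = word u * word v := by
  simp [word]

theorem Step.word_eq {n : ℕ} {x y x' y' : Letter n} (h : Step x y x' y') :
    word [x, y] = word [x', y'] := by
  refine (Con.eq _).2 (ConGen.Rel.of _ _ ?_)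
  cases h with
  | da i h =>
    obtain ⟨i, hi⟩ := i
    obtain rfl : i = 0 := h
    exact .da hi
  | AD i j h =>
    obtain ⟨j, hj⟩ := j
    obtain rfl : j = i.val + 1 := h
    exact .AD i hj
  | An i h =>
    obtain ⟨i, hi⟩ := i
    obtain rfl : i = n - 1 := by simp at h; omega
    exact .An (by omega)
  | cb i h =>
    obtain ⟨i, hi⟩ := i
    obtain rfl : i = n - 1 := by simp at h; omega
    exact .cb (by omega)
  | BC i j h =>
    obtain ⟨j, hj⟩ := j
    obtain rfl : j = i.val + 1 := h
    exact .BC i hj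

theorem Equ.word_eq {n : ℕ} {u v : List (Letter n)} (h : Equ u v) : word u = word v := by
  induction h with
  | nil => rfl
  | @cons x u v _ ih => rw [← List.singleton_append, word_append, ih, ← word_append]; rfl
  | @swap x y x' y' u v s _ ih =>
    have hs : word [x, y] = word [x', y'] := s.elim Step.word_eq fun t => t.word_eq.symm
    change word ([x, y] ++ u) = word ([x', y'] ++ v)
    rw [word_append, word_append, ih, hs]

theorem word_eq_iff {n : ℕ} {u v : List (Letter n)} : word u = word v ↔ Equ u v :=
  ⟨fun h => Mcon_le_equCon n ((Con.eq _).1 h), Equ.word_eq⟩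

theorem word_surjective {n : ℕ} : Function.Surjective (word (n := n)) := fun x => by
  obtain ⟨u, rfl⟩ := Con.mk'_surjective (c := Mcon n) x
  exact ⟨u.toList, rfl⟩

theorem mem_rIdeal_word {n : ℕ} {p w : List (Letter n)} :
    word w ∈ rIdeal (word p) ↔ ∃ u, Equ w (p ++ u) := by
  constructor
  · rintro ⟨m, hm⟩
    obtain ⟨u, rfl⟩ := word_surjective m
    exact ⟨u, word_eq_iff.1 (by rw [hm, word_append])⟩
  · rintro ⟨u, hu⟩
    exact ⟨word u, by rw [hu.word_eq, word_append]⟩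

theorem rIdeal_subset_of_mem {n : ℕ} {p q : Mn n} (h : q ∈ rIdeal p) : rIdeal q ⊆ rIdeal p := by
  obtain ⟨m, rfl⟩ := h
  rintro _ ⟨k, rfl⟩
  exact ⟨m * k, mul_assoc _ _ _⟩

theorem mem_rIdeal_of_length_lt {n : ℕ} {p q u v : List (Letter n)} (h : Equ (p ++ u) (q ++ v))
    (hl : p.length < q.length) : word q ∈ rIdeal (word p) := by
  obtain ⟨q₁, q₂, rfl, hq⟩ : ∃ q₁ q₂, q = q₁ ++ q₂ ∧ p.length = q₁.length :=
    ⟨q.take p.length, q.drop p.length, (List.take_append_drop _ _).symm, by simp; omega⟩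
  rw [List.append_assoc] at h
  rcases h.split hq with ⟨h₁, -⟩ | ⟨p', x, y, u', q', z, w, v', rfl, rfl, rfl, hv, s, h₁, -⟩
  · exact mem_rIdeal_word.2 ⟨q₂, h₁.symm.append (.refl _)⟩
  · cases q₂ with
    | nil => simp at hl hq; omega
    | cons w' q₂ =>
      obtain ⟨rfl, -⟩ := List.cons.inj hv
      refine mem_rIdeal_word.2 ⟨y :: q₂, ?_⟩
      simpa using h₁.symm.append (.swap s.symm (.refl q₂))

theorem exists_rIdeal_inter_eq {n : ℕ} (hn : 2 ≤ n) {p q u v : List (Letter n)}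
    (h : Equ (p ++ u) (q ++ v)) (hl : p.length = q.length) :
    ∃ r : Mn n, rIdeal (word p) ∩ rIdeal (word q) = rIdeal r := by
  by_cases hpq : Equ p q
  · exact ⟨word p, by rw [← hpq.word_eq, Set.inter_self]⟩
  rcases h.split hl with ⟨h₁, -⟩ | ⟨p', x, y, u', q', z, w, v', rfl, rfl, rfl, rfl, s, h₁, -⟩
  · exact absurd h₁ hpq
  refine ⟨word (p' ++ [x, y]), Set.Subset.antisymm ?_ (Set.subset_inter ?_ ?_)⟩
  · rintro m ⟨hp, hq⟩
    obtain ⟨m, rfl⟩ := word_surjective m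
    obtain ⟨s₁, hs₁⟩ := mem_rIdeal_word.1 hp
    obtain ⟨s₂, hs₂⟩ := mem_rIdeal_word.1 hq
    rcases (hs₁.symm.trans hs₂).split hl with
      ⟨h₂, -⟩ | ⟨p₂, x₂, y₂, u₂, q₂, z₂, w₂, v₂, hp₂, rfl, hq₂, rfl, s', -, -⟩
    · exact absurd h₂ hpq
    · obtain ⟨-, hx⟩ := List.append_inj' hp₂ rfl
      obtain ⟨-, hz⟩ := List.append_inj' hq₂ rfl
      obtain rfl : x = x₂ := by simpa using hx
      obtain rfl : z = z₂ := by simpa using hz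
      obtain rfl := s.eq_of_fst hn s'
      exact mem_rIdeal_word.2 ⟨u₂, by simpa using hs₁⟩
  · exact rIdeal_subset_of_mem (mem_rIdeal_word.2 ⟨[y], by simpa using Equ.refl _⟩)
  · exact rIdeal_subset_of_mem (mem_rIdeal_word.2 ⟨[w], by
      simpa using h₁.append (.swap s .nil)⟩)

/-- for `n ≥ 2`, the monoid `M_n` is singly aligned. -/
theorem Mn_singly_aligned (n : ℕ) (hn : 2 ≤ n) (p q : Mn n) :
    rIdeal p ∩ rIdeal q = ∅ ∨ ∃ r : Mn n, rIdeal p ∩ rIdeal q = rIdeal r := by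
  obtain ⟨p, rfl⟩ := word_surjective p
  obtain ⟨q, rfl⟩ := word_surjective q
  rcases Set.eq_empty_or_nonempty (rIdeal (word p) ∩ rIdeal (word q)) with h | ⟨m, hp, hq⟩
  · exact .inl h
  right
  obtain ⟨m, rfl⟩ := word_surjective m
  obtain ⟨u, hu⟩ := mem_rIdeal_word.1 hp
  obtain ⟨v, hv⟩ := mem_rIdeal_word.1 hq
  have h := hu.symm.trans hv
  rcases lt_trichotomy p.length q.length with hl | hl | hl
  · exact ⟨word q, Set.inter_eq_right.2 (rIdeal_subset_of_mem (mem_rIdeal_of_length_lt h hl))⟩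
  · exact exists_rIdeal_inter_eq hn h hl
  · exact ⟨word p,
      Set.inter_eq_left.2 (rIdeal_subset_of_mem (mem_rIdeal_of_length_lt h.symm hl))⟩

end Malcev
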